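/- arXiv:1011.5160 — 4 statements merged into one kernel-verified Lean document; each statement's English description precedes it below -/
import Mathlib

section
/- Let v ∈ E be a unit vector and η ∈ E arbitrary. Define p(t) = 2 sinh(t/2) and q(t) = 2 sinh(t/2)(cosh(t/2) − 1). Then ζ(t) = p(t) η + ⟨η,v⟩ q(t) v satisfies the Jacobi equation 4ζ''(t) − ζ(t) − 3⟨ζ(t),v⟩v = 0 for all t ∈ ℝ, with initial conditions ζ(0) = 0 and ζ'(0) = η. -/
/- Context: `E` is a real inner product space with a fixed unit vector `v`
(representing `Jγ̇` in a parallel orthonormal frame along a unit-speed geodesic `γ`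
of `ℂH^n` of constant holomorphic sectional curvature `−1`). A smooth curve
`ζ : ℝ → E` satisfies the Jacobi equation of `ℂH^n` if
`4ζ'' − ζ − 3⟨ζ,v⟩v = 0`. -/

open scoped RealInnerProductSpace
open Real

/-- for a unit vector `v ∈ E` and arbitrary `η ∈ E`, with
`p(t) = 2 sinh(t/2)` and `q(t) = 2 sinh(t/2)(cosh(t/2) − 1)`, the curve
`ζ(t) = p(t) η + ⟨η,v⟩ q(t) v` satisfies the Jacobi equation
`4ζ''(t) − ζ(t) − 3⟨ζ(t),v⟩v = 0` for all `t ∈ ℝ`, with initial conditions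
`ζ(0) = 0` and `ζ'(0) = η`. -/
theorem jacobi_field_normal (E : Type*) [NormedAddCommGroup E]
    [InnerProductSpace ℝ E] (v : E) (hv : ‖v‖ = 1) (η : E)
    (p q : ℝ → ℝ) (ζ : ℝ → E)
    (hp : ∀ t, p t = 2 * sinh (t / 2))
    (hq : ∀ t, q t = 2 * sinh (t / 2) * (cosh (t / 2) - 1))
    (hζ : ∀ t, ζ t = p t • η + (⟪η, v⟫ * q t) • v) :
    (∀ t : ℝ, (4 : ℝ) • deriv (deriv ζ) t - ζ t - (3 : ℝ) • ⟪ζ t, v⟫ • v = 0) ∧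
    ζ 0 = 0 ∧ deriv ζ 0 = η := by
  have hsinh (t : ℝ) : HasDerivAt (fun t : ℝ => sinh (t / 2)) (cosh (t / 2) * (1 / 2)) t :=
    ((hasDerivAt_id t).div_const 2).sinh
  have hcosh (t : ℝ) : HasDerivAt (fun t : ℝ => cosh (t / 2)) (sinh (t / 2) * (1 / 2)) t :=
    ((hasDerivAt_id t).div_const 2).cosh
  have hζ' : deriv ζ = fun t => cosh (t / 2) • η +
      (⟪η, v⟫ * (cosh (t / 2) ^ 2 + sinh (t / 2) ^ 2 - cosh (t / 2))) • v := by
    funext t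
    rw [funext hζ, funext hp, funext hq]
    have h₁ := ((hsinh t).const_mul 2).smul_const η
    have h₂ := ((((hsinh t).const_mul 2).mul ((hcosh t).sub_const 1)).const_mul ⟪η, v⟫).smul_const v
    refine ((h₁.add h₂).congr_deriv ?_).deriv
    module
  have hζ'' (t : ℝ) : deriv (deriv ζ) t = (sinh (t / 2) / 2) • η +
      (⟪η, v⟫ * (2 * sinh (t / 2) * cosh (t / 2) - sinh (t / 2) / 2)) • v := by
    rw [hζ']
    have h₁ := (hcosh t).smul_const η
    have h₂ := (((((hcosh t).pow 2).add ((hsinh t).pow 2)).sub (hcosh t)).const_mul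
      ⟪η, v⟫).smul_const v
    refine ((h₁.add h₂).congr_deriv ?_).deriv
    norm_num
    module
  refine ⟨fun t => ?_, ?_, ?_⟩
  · rw [hζ'', hζ, inner_add_left, real_inner_smul_left, real_inner_smul_left,
      real_inner_self_eq_norm_sq, hv, hp, hq]
    module
  · simp [hζ, hp, hq]
  · simp [hζ']
end

section
/- Let e₁, e₂, e₃ be orthonormal vectors in E, let φ ∈ (0,π/2), and set v = sin φ e₂ + cos φ e₃. Then the curve ζ(t) = cosh(t/2) e₁ − sin φ (cos²φ + sin²φ cosh(t/2)) sinh(t/2) e₂ − cos φ sin²φ (cosh(t/2) − 1) sinh(t/2) e₃ satisfies the Jacobi equation 4ζ''(t) − ζ(t) − 3⟨ζ(t),v⟩v = 0 for all t ∈ ℝ, with initial conditions ζ(0) = e₁ and ζ'(0) = −(1/2)(sin φ) e₂. (This is the Jacobi field ζ_Z along a normal geodesic to W_w, written in the parallel frame (Z, P̄ξ, F̄ξ) with v representing Jξ.) -/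
/- Context: `E` is a real inner product space with a fixed unit vector `v`
(representing `Jγ̇` in a parallel orthonormal frame along a unit-speed geodesic `γ`
of `ℂH^n` of constant holomorphic sectional curvature `−1`). A smooth curve
`ζ : ℝ → E` satisfies the Jacobi equation of `ℂH^n` if
`4ζ'' − ζ − 3⟨ζ,v⟩v = 0`. -/

open scoped RealInnerProductSpace
open Real

/-- The derivative of a combination of three fixed vectors is computed coefficientwise. -/
lemma hasDerivAt_smul_sub_smul_sub_smul {E : Type*} [NormedAddCommGroup E] [NormedSpace ℝ E]
    {f g h : ℝ → ℝ} {f' g' h' t : ℝ} (hf : HasDerivAt f f' t) (hg : HasDerivAt g g' t)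
    (hh : HasDerivAt h h' t) (x y z : E) :
    HasDerivAt (fun s => f s • x - g s • y - h s • z) (f' • x - g' • y - h' • z) t :=
  ((hf.smul_const x).sub (hg.smul_const y)).sub (hh.smul_const z)

lemma hasDerivAt_cosh_half (t : ℝ) :
    HasDerivAt (fun s : ℝ => cosh (s / 2)) (sinh (t / 2) / 2) t := by
  simpa [div_eq_mul_inv] using ((hasDerivAt_id t).div_const 2).cosh

lemma hasDerivAt_sinh_half (t : ℝ) :
    HasDerivAt (fun s : ℝ => sinh (s / 2)) (cosh (t / 2) / 2) t := by
  simpa [div_eq_mul_inv] using ((hasDerivAt_id t).div_const 2).sinh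

/-- let `e₁, e₂, e₃` be orthonormal vectors in `E`, `φ ∈ (0,π/2)`,
and `v = sin φ e₂ + cos φ e₃`. Then
`ζ(t) = cosh(t/2) e₁ − sin φ (cos²φ + sin²φ cosh(t/2)) sinh(t/2) e₂
− cos φ sin²φ (cosh(t/2) − 1) sinh(t/2) e₃` satisfies the Jacobi equation
`4ζ''(t) − ζ(t) − 3⟨ζ(t),v⟩v = 0` for all `t ∈ ℝ`, with `ζ(0) = e₁` and
`ζ'(0) = −(1/2)(sin φ) e₂`. (This is the Jacobi field `ζ_Z` along a normal
geodesic to `W_w`, in the parallel frame `(Z, P̄ξ, F̄ξ)`, `v` representing `Jξ`.) -/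
theorem jacobi_field_Z (E : Type*) [NormedAddCommGroup E]
    [InnerProductSpace ℝ E] (e₁ e₂ e₃ : E)
    (h1 : ‖e₁‖ = 1) (h2 : ‖e₂‖ = 1) (h3 : ‖e₃‖ = 1)
    (h12 : ⟪e₁, e₂⟫ = 0) (h13 : ⟪e₁, e₃⟫ = 0) (h23 : ⟪e₂, e₃⟫ = 0)
    (φ : ℝ) (hφ : φ ∈ Set.Ioo 0 (π / 2)) (v : E)
    (hv : v = sin φ • e₂ + cos φ • e₃) (ζ : ℝ → E)
    (hζ : ∀ t, ζ t = cosh (t / 2) • e₁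
      - (sin φ * (cos φ ^ 2 + sin φ ^ 2 * cosh (t / 2)) * sinh (t / 2)) • e₂
      - (cos φ * sin φ ^ 2 * (cosh (t / 2) - 1) * sinh (t / 2)) • e₃) :
    (∀ t : ℝ, (4 : ℝ) • deriv (deriv ζ) t - ζ t - (3 : ℝ) • ⟪ζ t, v⟫ • v = 0) ∧
    ζ 0 = e₁ ∧ deriv ζ 0 = -((2⁻¹ * sin φ) • e₂) := by
  have hζ' : ∀ t, HasDerivAt ζ ((sinh (t / 2) / 2) • e₁
      - (sin φ * (cos φ ^ 2 * cosh (t / 2)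
          + sin φ ^ 2 * (cosh (t / 2) ^ 2 + sinh (t / 2) ^ 2)) / 2) • e₂
      - (cos φ * sin φ ^ 2 * (cosh (t / 2) ^ 2 + sinh (t / 2) ^ 2 - cosh (t / 2)) / 2) • e₃) t := by
    intro t
    have hC := hasDerivAt_cosh_half t
    have hS := hasDerivAt_sinh_half t
    rw [funext hζ]
    refine hasDerivAt_smul_sub_smul_sub_smul hC
      (((((hC.const_mul (sin φ ^ 2)).const_add (cos φ ^ 2)).const_mul (sin φ)).mul
        hS).congr_deriv ?_)
      ((((hC.sub_const 1).const_mul (cos φ * sin φ ^ 2)).mul hS).congr_deriv ?_) e₁ e₂ e₃ <;> ring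
  have hζ'' : ∀ t, HasDerivAt (deriv ζ) ((cosh (t / 2) / 4) • e₁
      - (sin φ * (cos φ ^ 2 / 4 + sin φ ^ 2 * cosh (t / 2)) * sinh (t / 2)) • e₂
      - (cos φ * sin φ ^ 2 * (cosh (t / 2) - 1 / 4) * sinh (t / 2)) • e₃) t := by
    intro t
    have hC := hasDerivAt_cosh_half t
    have hS := hasDerivAt_sinh_half t
    have hCS := (hC.fun_pow 2).fun_add (hS.fun_pow 2)
    rw [funext fun s => (hζ' s).deriv]
    refine hasDerivAt_smul_sub_smul_sub_smul ((hS.div_const 2).congr_deriv ?_)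
      (((((hC.const_mul (cos φ ^ 2)).fun_add (hCS.const_mul (sin φ ^ 2))).const_mul
        (sin φ)).div_const 2).congr_deriv ?_)
      ((((hCS.fun_sub hC).const_mul (cos φ * sin φ ^ 2)).div_const 2).congr_deriv ?_) e₁ e₂ e₃ <;>
      norm_num <;> ring
  refine ⟨fun t => ?_, by simp [hζ], ?_⟩
  · have h32 : ⟪e₃, e₂⟫ = 0 := by rw [real_inner_comm, h23]
    have hinner : ⟪ζ t, v⟫ = -(sin φ ^ 2 * cosh (t / 2) * sinh (t / 2)) := by
      simp only [hζ, hv, inner_sub_left, inner_add_right, real_inner_smul_left,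
        real_inner_smul_right, real_inner_self_eq_norm_sq, h2, h3, h12, h13, h23, h32]
      linear_combination
        -(sin φ ^ 2 * cosh (t / 2) * sinh (t / 2)) * sin_sq_add_cos_sq φ
    rw [(hζ'' t).deriv, hinner, hζ, hv]
    module
  · rw [(hζ' 0).deriv]
    simp only [zero_div, sinh_zero, cosh_zero]
    match_scalars
    · ring
    · linear_combination -(sin φ / 2) * sin_sq_add_cos_sq φ
    · ring
end

section
/- Let e₁, e₂, e₃ be orthonormal vectors in E, let φ ∈ (0,π/2), and set v = sin φ e₂ + cos φ e₃. Then the curve ζ(t) = 2 sin φ cos φ (cosh(t/2) − 1) sinh(t/2) e₂ + 2(1 + cos²φ(cosh(t/2) − 1)) sinh(t/2) e₃ satisfies the Jacobi equation 4ζ''(t) − ζ(t) − 3⟨ζ(t),v⟩v = 0 for all t ∈ ℝ, with initial conditions ζ(0) = 0 and ζ'(0) = e₃. (This is the Jacobi field ζ_{F̄ξ} along a normal geodesic to W_w, written in the parallel frame (Z, P̄ξ, F̄ξ) with v representing Jξ.) -/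
/- Context: `E` is a real inner product space with a fixed unit vector `v`
(representing `Jγ̇` in a parallel orthonormal frame along a unit-speed geodesic `γ`
of `ℂH^n` of constant holomorphic sectional curvature `−1`). A smooth curve
`ζ : ℝ → E` satisfies the Jacobi equation of `ℂH^n` if
`4ζ'' − ζ − 3⟨ζ,v⟩v = 0`. -/

open scoped RealInnerProductSpace
open Real

/-- The velocity of the curve `t ↦ sinh t • a + (2 sinh (t / 2)) • b`. -/
lemma hasDerivAt_sinh_smul_add_two_mul_sinh_half_smul {E : Type*} [NormedAddCommGroup E]
    [NormedSpace ℝ E] (a b : E) (t : ℝ) :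
    HasDerivAt (fun t : ℝ => sinh t • a + (2 * sinh (t / 2)) • b)
      (cosh t • a + cosh (t / 2) • b) t := by
  have h := (((hasDerivAt_id t).div_const 2).sinh.const_mul 2).smul_const b
  refine ((hasDerivAt_sinh t).smul_const a).add (h.congr_deriv ?_)
  congr 1
  simp only [id]
  ring

/-- The derivative of the velocity `t ↦ cosh t • a + cosh (t / 2) • b`. -/
lemma hasDerivAt_cosh_smul_add_cosh_half_smul {E : Type*} [NormedAddCommGroup E]
    [NormedSpace ℝ E] (a b : E) (t : ℝ) :
    HasDerivAt (fun t : ℝ => cosh t • a + cosh (t / 2) • b)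
      (sinh t • a + (sinh (t / 2) / 2) • b) t := by
  have h := ((hasDerivAt_id t).div_const 2).cosh.smul_const b
  refine ((hasDerivAt_cosh t).smul_const a).add (h.congr_deriv ?_)
  congr 1
  simp only [id]
  ring

/-- let `e₁, e₂, e₃` be orthonormal vectors in `E`, `φ ∈ (0,π/2)`,
and `v = sin φ e₂ + cos φ e₃`. Then
`ζ(t) = 2 sin φ cos φ (cosh(t/2) − 1) sinh(t/2) e₂
+ 2(1 + cos²φ(cosh(t/2) − 1)) sinh(t/2) e₃` satisfies the Jacobi equation
`4ζ''(t) − ζ(t) − 3⟨ζ(t),v⟩v = 0` for all `t ∈ ℝ`, with `ζ(0) = 0` and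
`ζ'(0) = e₃`. (This is the Jacobi field `ζ_{F̄ξ}` along a normal geodesic to
`W_w`, in the parallel frame `(Z, P̄ξ, F̄ξ)`, `v` representing `Jξ`.) -/
theorem jacobi_field_F (E : Type*) [NormedAddCommGroup E]
    [InnerProductSpace ℝ E] (e₁ e₂ e₃ : E)
    (h1 : ‖e₁‖ = 1) (h2 : ‖e₂‖ = 1) (h3 : ‖e₃‖ = 1)
    (h12 : ⟪e₁, e₂⟫ = 0) (h13 : ⟪e₁, e₃⟫ = 0) (h23 : ⟪e₂, e₃⟫ = 0)
    (φ : ℝ) (hφ : φ ∈ Set.Ioo 0 (π / 2)) (v : E)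
    (hv : v = sin φ • e₂ + cos φ • e₃) (ζ : ℝ → E)
    (hζ : ∀ t, ζ t = (2 * sin φ * cos φ * (cosh (t / 2) - 1) * sinh (t / 2)) • e₂
      + (2 * (1 + cos φ ^ 2 * (cosh (t / 2) - 1)) * sinh (t / 2)) • e₃) :
    (∀ t : ℝ, (4 : ℝ) • deriv (deriv ζ) t - ζ t - (3 : ℝ) • ⟪ζ t, v⟫ • v = 0) ∧
    ζ 0 = 0 ∧ deriv ζ 0 = e₃ := by
  have hvv : ⟪v, v⟫ = 1 := by
    simp only [hv, inner_add_left, inner_add_right, real_inner_smul_left, real_inner_smul_right,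
      real_inner_comm e₂ e₃, h23, real_inner_self_eq_norm_sq, norm_smul,
      Real.norm_eq_abs, mul_pow, sq_abs, h2, h3]
    linear_combination sin_sq_add_cos_sq φ
  have he₃v : ⟪e₃, v⟫ = cos φ := by
    simp [hv, inner_add_right, real_inner_smul_right, real_inner_comm e₂ e₃, h23, h3]
  -- The components of `ζ` along `v` and orthogonal to `v`.
  have hζ_eq : ζ = fun t : ℝ => sinh t • (cos φ • v) + (2 * sinh (t / 2)) • (e₃ - cos φ • v) := by
    funext t
    have hs : sinh t = 2 * sinh (t / 2) * cosh (t / 2) := by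
      rw [← sinh_two_mul, mul_div_cancel₀ t two_ne_zero]
    rw [hζ, hv, hs]
    module
  have hζ' : deriv ζ = fun t : ℝ => cosh t • (cos φ • v) + cosh (t / 2) • (e₃ - cos φ • v) := by
    funext t
    rw [hζ_eq]
    exact (hasDerivAt_sinh_smul_add_two_mul_sinh_half_smul _ _ t).deriv
  refine ⟨fun t => ?_, by simp [hζ_eq], by simp [hζ']⟩
  have hinner : ⟪ζ t, v⟫ = sinh t * cos φ := by
    simp only [hζ_eq, inner_add_left, inner_sub_left, real_inner_smul_left, hvv, he₃v]
    ring
  rw [hinner, hζ', (hasDerivAt_cosh_smul_add_cosh_half_smul _ _ t).deriv, hζ_eq]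
  module
end

section
/- For all t ∈ ℝ and all φ ∈ [0,π/2], det M(t,φ) = 2 cosh(t/2)³ sinh(t/2). In particular det M(t,φ) is independent of φ, and M(t,φ) is invertible for every t > 0. -/
/- Context: `M(t,φ)` is the 3×3 block, corresponding to the vectors `Z, P̄ξ, F̄ξ`,
of the endomorphism `D(t)` built from Jacobi fields along a geodesic normal to the
submanifold `W_w` in `ℂH^n`, for a unit normal `ξ` of Kähler angle `φ`; its columns
are listed in the paper. -/

open Real

noncomputable section

/-- The 3×3 block `M(t,φ)` (in the basis `Z, P̄ξ, F̄ξ`) of the endomorphism `D(t)`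
built from Jacobi fields along a geodesic normal to `W_w` in `ℂH^n`, for a unit
normal `ξ` of Kähler angle `φ`; the columns are the Jacobi fields `ζ_Z`,
`ζ_{P̄ξ}`, `ζ_{F̄ξ}`. -/
def M (t φ : ℝ) : Matrix (Fin 3) (Fin 3) ℝ :=
  Matrix.of
    ![![cosh (t / 2),
        -(sin φ * sinh (t / 2)),
        0],
      ![-(sin φ * (cos φ ^ 2 + sin φ ^ 2 * cosh (t / 2)) * sinh (t / 2)),
        cos φ ^ 2 * cosh (t / 2) + sin φ ^ 2 * cosh t,
        2 * sin φ * cos φ * (cosh (t / 2) - 1) * sinh (t / 2)],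
      ![-(cos φ * sin φ ^ 2 * (cosh (t / 2) - 1) * sinh (t / 2)),
        -(sin φ * cos φ * (cosh (t / 2) - cosh t)),
        2 * (1 + cos φ ^ 2 * (cosh (t / 2) - 1)) * sinh (t / 2)]]

/-- The entrywise derivative `M'(r,φ)` of `M` with respect to the first variable. -/
def M' (r φ : ℝ) : Matrix (Fin 3) (Fin 3) ℝ :=
  Matrix.of fun i j => deriv (fun t => M t φ i j) r

/-- for all `t ∈ ℝ` and all `φ ∈ [0,π/2]`,
`det M(t,φ) = 2 cosh(t/2)³ sinh(t/2)`. In particular `det M(t,φ)` is independent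
of `φ`, and `M(t,φ)` is invertible for every `t > 0`. -/
theorem det_M (t φ : ℝ) (hφ : φ ∈ Set.Icc 0 (π / 2)) :
    (M t φ).det = 2 * cosh (t / 2) ^ 3 * sinh (t / 2) ∧
    (0 < t → IsUnit (M t φ)) := by
  have det_eq : (M t φ).det = 2 * cosh (t / 2) ^ 3 * sinh (t / 2) := by
    have cosh_eq : cosh t = 2 * cosh (t / 2) ^ 2 - 1 := by
      have h := cosh_two_mul (t / 2)
      rw [mul_div_cancel₀ t two_ne_zero, sinh_sq] at h
      linarith
    have trig : sin φ ^ 2 + cos φ ^ 2 = 1 := sin_sq_add_cos_sq φ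
    have hyp : cosh (t / 2) ^ 2 - sinh (t / 2) ^ 2 = 1 := cosh_sq_sub_sinh_sq _
    simp only [M, Matrix.det_fin_three, Matrix.of_apply, Matrix.cons_val, cosh_eq]
    grind
  refine ⟨det_eq, fun ht => ?_⟩
  rw [Matrix.isUnit_iff_isUnit_det, det_eq, isUnit_iff_ne_zero]
  have hsinh : 0 < sinh (t / 2) := sinh_pos_iff.2 (half_pos ht)
  have hcosh := cosh_pos (t / 2)
  positivity
end
end
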